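/- Let U and W be independent random variables, each uniformly distributed on [0,1], and let 𝒱 be a v-transform with fulcrum δ, differentiable at every point of [0,1] except δ, with measurable conditional down probability Δ taking values in [0,1] and satisfying E[Δ(V)] = δ for V uniform on [0,1]. Set V = 𝒱(U) and Ũ = 𝒱⁻¹(V, W), where 𝒱⁻¹(v,w) is the stochastic inversion function of 𝒱. Then P(Ũ = U) = δ² + (1−δ)² + 2·Var(Δ(V)) ≥ δ² + (1−δ)² ≥ 1/2. -/

import Mathlib

open Set MeasureTheory ProbabilityTheory

/-- A v-transform with fulcrum `δ`: a mapping of `[0,1]` to `[0,1]` with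
`𝒱 0 = 𝒱 1 = 1`, `𝒱 δ = 0`, continuous, strictly decreasing on `[0,δ]`,
strictly increasing on `[δ,1]`, and satisfying the square property. -/
structure IsVTransform (V : ℝ → ℝ) (δ : ℝ) : Prop where
  mapsTo : ∀ u ∈ Set.Icc (0:ℝ) 1, V u ∈ Set.Icc (0:ℝ) 1
  fulcrum_mem : δ ∈ Set.Ioo (0:ℝ) 1
  map_zero : V 0 = 1
  map_one : V 1 = 1
  map_fulcrum : V δ = 0
  contOn : ContinuousOn V (Set.Icc 0 1)
  strictAntiOn : StrictAntiOn V (Set.Icc 0 δ)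
  strictMonoOn : StrictMonoOn V (Set.Icc δ 1)
  square : ∀ u ∈ Set.Icc (0:ℝ) 1, u ≠ δ →
    ∃ us ∈ Set.Icc (0:ℝ) 1, ((u < δ ∧ δ < us) ∨ (us < δ ∧ δ < u)) ∧
      V us = V u ∧ |us - u| = V u

/-- The partial inverse `𝒱⁻¹(v) = inf {u ∈ [0,1] : 𝒱(u) = v}` of a v-transform,
taking values in `[0,δ]` (the decreasing branch). -/
noncomputable def partialInverse (V : ℝ → ℝ) (v : ℝ) : ℝ :=
  sInf {u | u ∈ Set.Icc (0:ℝ) 1 ∧ V u = v}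

/-- The conditional down probability `Δ(v) = -1 / 𝒱′(𝒱⁻¹(v))`, where the derivative
is taken within `[0,δ]` (so that at the fulcrum it is the left derivative, following
the convention of the paper). -/
noncomputable def downProb (V : ℝ → ℝ) (δ : ℝ) (v : ℝ) : ℝ :=
  -1 / derivWithin V (Set.Icc 0 δ) (partialInverse V v)

/-- The stochastic inversion function `𝒱⁻¹(v,w)` of a v-transform. -/
noncomputable def stochInv (V : ℝ → ℝ) (δ : ℝ) (v w : ℝ) : ℝ :=
  if w ≤ downProb V δ v then partialInverse V v else v + partialInverse V v

lemma vt_left {V : ℝ → ℝ} {δ : ℝ} (hV : IsVTransform V δ) {u : ℝ} (hu : u ∈ Icc (0:ℝ) δ) :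
    V (u + V u) = V u ∧ u + V u ∈ Icc δ 1 := by
  have hδ := hV.fulcrum_mem
  rcases eq_or_lt_of_le hu.2 with h | h
  · subst h
    simp [hV.map_fulcrum, hδ.2.le]
  · obtain ⟨s, hs, h1, h2, h3⟩ := hV.square u ⟨hu.1, hu.2.trans hδ.2.le⟩ h.ne
    rcases h1 with h1 | h1
    · rw [abs_of_pos (by linarith)] at h3
      have : u + V u = s := by linarith
      rw [this]
      exact ⟨h2, h1.2.le, hs.2⟩
    · linarith

lemma vt_right {V : ℝ → ℝ} {δ : ℝ} (hV : IsVTransform V δ) {u : ℝ} (hu : u ∈ Ioc δ 1) :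
    V (u - V u) = V u ∧ u - V u ∈ Icc 0 δ := by
  have hδ := hV.fulcrum_mem
  obtain ⟨s, hs, h1, h2, h3⟩ := hV.square u ⟨hδ.1.le.trans hu.1.le, hu.2⟩ hu.1.ne'
  rcases h1 with h1 | h1
  · linarith [hu.1]
  · rw [abs_of_neg (by linarith)] at h3
    have : u - V u = s := by linarith
    rw [this]
    exact ⟨h2, hs.1, h1.1.le⟩

lemma vt_pinv_left {V : ℝ → ℝ} {δ : ℝ} (hV : IsVTransform V δ) {u : ℝ}
    (hu : u ∈ Icc (0:ℝ) δ) : partialInverse V (V u) = u := by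
  have hδ := hV.fulcrum_mem
  refine IsLeast.csInf_eq ⟨⟨⟨hu.1, hu.2.trans hδ.2.le⟩, rfl⟩, ?_⟩
  rintro x ⟨hx, hxu⟩
  by_contra! h
  have := hV.strictAntiOn ⟨hx.1, h.le.trans hu.2⟩ hu h
  linarith

lemma vt_pinv_right {V : ℝ → ℝ} {δ : ℝ} (hV : IsVTransform V δ) {u : ℝ}
    (hu : u ∈ Ioc δ 1) : partialInverse V (V u) = u - V u := by
  obtain ⟨h1, h2⟩ := vt_right hV hu
  rw [← vt_pinv_left hV h2, h1]

lemma vt_pos {V : ℝ → ℝ} {δ : ℝ} (hV : IsVTransform V δ) {u : ℝ}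
    (hu : u ∈ Icc (0:ℝ) 1) (h : u ≠ δ) : 0 < V u := by
  have hδ := hV.fulcrum_mem
  rw [← hV.map_fulcrum]
  rcases lt_or_gt_of_ne h with h | h
  · exact hV.strictAntiOn ⟨hu.1, h.le⟩ ⟨hδ.1.le, le_rfl⟩ h
  · exact hV.strictMonoOn ⟨le_rfl, hδ.2.le⟩ ⟨h.le, hu.2⟩ h

lemma vt_surj {V : ℝ → ℝ} {δ : ℝ} (hV : IsVTransform V δ) {v : ℝ}
    (hv : v ∈ Icc (0:ℝ) 1) : ∃ u ∈ Icc (0:ℝ) δ, V u = v := by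
  have hδ := hV.fulcrum_mem
  have := intermediate_value_Icc' hδ.1.le
    (hV.contOn.mono (Icc_subset_Icc_right hδ.2.le))
  rw [hV.map_zero, hV.map_fulcrum] at this
  exact this hv

lemma vt_image {V : ℝ → ℝ} {δ : ℝ} (hV : IsVTransform V δ) : V '' Ico 0 δ = Ioc 0 1 := by
  have hδ := hV.fulcrum_mem
  ext v
  constructor
  · rintro ⟨u, hu, rfl⟩
    have hu' : u ∈ Icc (0:ℝ) 1 := ⟨hu.1, hu.2.le.trans hδ.2.le⟩
    exact ⟨vt_pos hV hu' hu.2.ne, (hV.mapsTo u hu').2⟩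
  · intro hv
    obtain ⟨u, hu, rfl⟩ := vt_surj hV ⟨hv.1.le, hv.2⟩
    refine ⟨u, ⟨hu.1, lt_of_le_of_ne hu.2 ?_⟩, rfl⟩
    rintro rfl
    exact absurd hv.1 (by simp [hV.map_fulcrum])

lemma vt_sublevel {V : ℝ → ℝ} {δ : ℝ} (hV : IsVTransform V δ) {p : ℝ}
    (hp : p ∈ Icc (0:ℝ) δ) :
    {u | u ∈ Icc (0:ℝ) 1 ∧ V u ≤ V p} = Icc p (p + V p) := by
  have hδ := hV.fulcrum_mem
  obtain ⟨h1, h2⟩ := vt_left hV hp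
  ext u
  constructor
  · rintro ⟨hu, huv⟩
    rcases le_total u δ with h | h
    · exact ⟨(hV.strictAntiOn.le_iff_ge ⟨hu.1, h⟩ hp).1 huv, h.trans h2.1⟩
    · refine ⟨hp.2.trans h, (hV.strictMonoOn.le_iff_le ⟨h, hu.2⟩ h2).1 ?_⟩
      rw [h1]; exact huv
  · rintro hu
    refine ⟨⟨hp.1.trans hu.1, hu.2.trans h2.2⟩, ?_⟩
    rcases le_total u δ with h | h
    · exact (hV.strictAntiOn.le_iff_ge ⟨hp.1.trans hu.1, h⟩ hp).2 hu.1
    · rw [← h1]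
      exact (hV.strictMonoOn.le_iff_le ⟨h, hu.2.trans h2.2⟩ h2).2 hu.2

lemma vt_map {V Vc : ℝ → ℝ} {δ : ℝ} (hV : IsVTransform V δ) (hVc : Measurable Vc)
    (hE : ∀ u ∈ Icc (0:ℝ) 1, Vc u = V u) :
    Measure.map Vc (volume.restrict (Icc (0:ℝ) 1)) = volume.restrict (Icc (0:ℝ) 1) := by
  have hfin : IsFiniteMeasure (Measure.map Vc (volume.restrict (Icc (0:ℝ) 1))) :=
    Measure.isFiniteMeasure_map _ _
  refine Measure.ext_of_Iic _ _ fun v => ?_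
  rw [Measure.map_apply hVc measurableSet_Iic,
    Measure.restrict_apply (hVc measurableSet_Iic), Measure.restrict_apply measurableSet_Iic]
  have e : Vc ⁻¹' Iic v ∩ Icc 0 1 = {u | u ∈ Icc (0:ℝ) 1 ∧ V u ≤ v} := by
    ext u
    simp only [mem_inter_iff, mem_preimage, mem_Iic, mem_ofPred_eq]
    constructor
    · rintro ⟨a, b⟩; exact ⟨b, hE u b ▸ a⟩
    · rintro ⟨a, b⟩; exact ⟨(hE u a).symm ▸ b, a⟩
  rw [e]
  rcases lt_or_ge v 0 with h0 | h0
  · have e1 : {u | u ∈ Icc (0:ℝ) 1 ∧ V u ≤ v} = ∅ := by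
      ext u
      simp only [mem_ofPred_eq, mem_empty_iff_false, iff_false, not_and]
      intro hu; have := (hV.mapsTo u hu).1; linarith
    have e2 : Iic v ∩ Icc (0:ℝ) 1 = ∅ := by
      ext u
      simp only [mem_inter_iff, mem_Iic, mem_Icc, mem_empty_iff_false, iff_false]
      rintro ⟨a, b, c⟩; linarith
    rw [e1, e2]
  rcases le_or_gt v 1 with h1 | h1
  · obtain ⟨p, hp, rfl⟩ := vt_surj hV ⟨h0, h1⟩
    rw [vt_sublevel hV hp]
    have e2 : Iic (V p) ∩ Icc (0:ℝ) 1 = Icc 0 (V p) := by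
      ext u
      simp only [mem_inter_iff, mem_Iic, mem_Icc]
      constructor
      · rintro ⟨a, b, c⟩; exact ⟨b, a⟩
      · rintro ⟨a, b⟩; exact ⟨b, a, b.trans h1⟩
    rw [e2]; simp
  · have e1 : {u | u ∈ Icc (0:ℝ) 1 ∧ V u ≤ v} = Icc 0 1 := by
      ext u
      simp only [mem_ofPred_eq, and_iff_left_iff_imp]
      intro hu; have := (hV.mapsTo u hu).2; linarith
    have e2 : Iic v ∩ Icc (0:ℝ) 1 = Icc 0 1 := by
      apply inter_eq_right.2
      intro u hu; exact hu.2.trans h1.le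
    rw [e1, e2]

lemma vt_cov {V : ℝ → ℝ} {δ : ℝ} (hV : IsVTransform V δ)
    (hdiff : ∀ u ∈ Set.Icc (0:ℝ) 1, u ≠ δ →
      DifferentiableWithinAt ℝ V (Set.Icc 0 1) u) :
    ∫ v in Icc (0:ℝ) 1, downProb V δ v ^ 2 = ∫ u in Ico 0 δ, downProb V δ (V u) := by
  have hδ := hV.fulcrum_mem
  rw [integral_Icc_eq_integral_Ioc, ← vt_image hV,
    integral_image_eq_integral_abs_deriv_smul measurableSet_Ico
      (f' := derivWithin V (Icc 0 δ)) ?_ ?_]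
  · refine setIntegral_congr_fun measurableSet_Ico fun u hu => ?_
    have hn : derivWithin V (Icc 0 δ) u ≤ 0 :=
      hV.strictAntiOn.antitoneOn.derivWithin_nonpos
    simp only [downProb, vt_pinv_left hV (Ico_subset_Icc_self hu), smul_eq_mul]
    rw [abs_of_nonpos hn]
    by_cases h : derivWithin V (Icc 0 δ) u = 0
    · simp [h]
    · field_simp
  · intro u hu
    exact ((hdiff u ⟨hu.1, hu.2.le.trans hδ.2.le⟩ hu.2.ne).mono
      (Icc_subset_Icc_right hδ.2.le)).hasDerivWithinAt.mono Ico_subset_Icc_self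
  · exact hV.strictAntiOn.injOn.mono Ico_subset_Icc_self

lemma unif_le {d : ℝ} (hd : d ∈ Icc (0:ℝ) 1) :
    volume.restrict (Icc (0:ℝ) 1) {w | w ≤ d} = ENNReal.ofReal d := by
  have e2 : Iic d ∩ Icc (0:ℝ) 1 = Icc 0 d := by
    ext u
    simp only [mem_inter_iff, mem_Iic, mem_Icc]
    constructor
    · rintro ⟨a, b, c⟩; exact ⟨b, a⟩
    · rintro ⟨a, b⟩; exact ⟨b, a, b.trans hd.2⟩
  change volume.restrict (Icc (0:ℝ) 1) (Iic d) = _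
  rw [Measure.restrict_apply measurableSet_Iic, e2]; simp

lemma unif_gt {d : ℝ} (hd : d ∈ Icc (0:ℝ) 1) :
    volume.restrict (Icc (0:ℝ) 1) {w | d < w} = ENNReal.ofReal (1 - d) := by
  have e2 : Ioi d ∩ Icc (0:ℝ) 1 = Ioc d 1 := by
    ext u
    simp only [mem_inter_iff, mem_Ioi, mem_Icc, mem_Ioc]
    constructor
    · rintro ⟨a, b, c⟩; exact ⟨a, c⟩
    · rintro ⟨a, b⟩; exact ⟨a, hd.1.trans a.le, b⟩
  change volume.restrict (Icc (0:ℝ) 1) (Ioi d) = _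
  rw [Measure.restrict_apply measurableSet_Ioi, e2]; simp

lemma stochInv_iff {V : ℝ → ℝ} {δ : ℝ} (hV : IsVTransform V δ) {u w : ℝ}
    (hu : u ∈ Icc (0:ℝ) 1) (h : u ≠ δ) :
    stochInv V δ (V u) w = u ↔
      (u < δ ∧ w ≤ downProb V δ (V u)) ∨ (δ < u ∧ downProb V δ (V u) < w) := by
  have hp := vt_pos hV hu h
  unfold stochInv
  rcases lt_or_gt_of_ne h with h | h
  · rw [vt_pinv_left hV ⟨hu.1, h.le⟩]
    split_ifs with hw
    · simp [h, hw]
    · simp [hw, h.le, not_lt, hp.ne']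
  · rw [vt_pinv_right hV ⟨h, hu.2⟩]
    split_ifs with hw
    · simp [hw, h.le, not_lt, hp.ne']
    · simp [h, not_le.1 hw]

/-- Proposition 1 of the paper: for `U, W` independent uniform
on `[0,1]`, `V = 𝒱(U)` and `Ũ = 𝒱⁻¹(V,W)`, the probability of recovering the
original value is `P(Ũ = U) = δ² + (1-δ)² + 2 Var(Δ(V)) ≥ δ² + (1-δ)² ≥ 1/2`. -/
theorem prob_stochInv_recovers {Ω : Type*} [MeasurableSpace Ω]
    (μ : Measure Ω) [IsProbabilityMeasure μ]
    (U W : Ω → ℝ) (hU : Measurable U) (hW : Measurable W)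
    (hUunif : Measure.map U μ = volume.restrict (Set.Icc 0 1))
    (hWunif : Measure.map W μ = volume.restrict (Set.Icc 0 1))
    (hindep : IndepFun U W μ)
    (V : ℝ → ℝ) (δ : ℝ) (hV : IsVTransform V δ)
    (hdiff : ∀ u ∈ Set.Icc (0:ℝ) 1, u ≠ δ →
      DifferentiableWithinAt ℝ V (Set.Icc 0 1) u)
    (hΔmeas : Measurable (downProb V δ))
    (hΔrange : ∀ v ∈ Set.Icc (0:ℝ) 1, downProb V δ v ∈ Set.Icc (0:ℝ) 1)
    (hΔmean : (∫ v in Set.Icc (0:ℝ) 1, downProb V δ v) = δ) :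
    μ {ω | stochInv V δ (V (U ω)) (W ω) = U ω} =
      ENNReal.ofReal (δ^2 + (1-δ)^2 +
        2 * variance (fun ω => downProb V δ (V (U ω))) μ) ∧
    δ^2 + (1-δ)^2 + 2 * variance (fun ω => downProb V δ (V (U ω))) μ
      ≥ δ^2 + (1-δ)^2 ∧
    δ^2 + (1-δ)^2 ≥ (1:ℝ)/2 := by
  have hδ := hV.fulcrum_mem
  set L : Measure ℝ := volume.restrict (Icc (0:ℝ) 1) with hL
  have hLp : IsProbabilityMeasure L := ⟨by simp [hL]⟩
  set Vc : ℝ → ℝ := IccExtend (zero_le_one (α := ℝ)) ((Icc (0:ℝ) 1).domRestrict V) with hVcdef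
  have hVc : Measurable Vc :=
    (hV.contOn.domRestrict.Icc_extend' (h := zero_le_one (α := ℝ))).measurable
  have hE : ∀ u ∈ Icc (0:ℝ) 1, Vc u = V u := by
    intro u hu
    rw [hVcdef, IccExtend_of_mem _ _ hu]; rfl
  have hmap : Measure.map Vc L = L := vt_map hV hVc hE
  have hmapVU : Measure.map (fun ω => Vc (U ω)) μ = L := by
    have := Measure.map_map (μ := μ) hVc hU
    rw [hUunif, hmap] at this
    exact this.symm
  set D : ℝ → ℝ := fun u => downProb V δ (Vc u) with hD
  have hDm : Measurable D := hΔmeas.comp hVc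
  have hVcr : ∀ u, Vc u ∈ Icc (0:ℝ) 1 := by
    intro u
    exact hV.mapsTo _ (projIcc (0:ℝ) 1 zero_le_one u).2
  have hDr : ∀ u, D u ∈ Icc (0:ℝ) 1 := fun u => hΔrange _ (hVcr u)
  have hDi : Integrable D L :=
    Integrable.of_bound hDm.aestronglyMeasurable 1 (ae_of_all _ fun u => by
      rw [Real.norm_eq_abs, abs_le]; constructor <;> linarith [(hDr u).1, (hDr u).2])
  have hLmem : ∀ᵐ u ∂L, u ∈ Icc (0:ℝ) 1 := ae_restrict_mem measurableSet_Icc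
  have hLne : ∀ᵐ u ∂L, u ≠ δ := by
    apply ae_restrict_of_ae
    exact Measure.ae_ne volume δ
  have hUmem : ∀ᵐ ω ∂μ, U ω ∈ Icc (0:ℝ) 1 ∧ U ω ≠ δ := by
    apply ae_of_ae_map (p := fun u => u ∈ Icc (0:ℝ) 1 ∧ u ≠ δ) hU.aemeasurable
    rw [hUunif]
    exact hLmem.and hLne
  -- integrals of D
  have hint1 : ∫ u, D u ∂L = δ := by
    have := integral_map (μ := L) hVc.aemeasurable (f := downProb V δ)
      hΔmeas.aestronglyMeasurable
    rw [hmap] at this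
    rw [← hΔmean, this]
  set Q : ℝ := ∫ v in Icc (0:ℝ) 1, downProb V δ v ^ 2 with hQ
  have hint3 : ∫ u in Iio δ, D u ∂L = Q := by
    rw [hQ, vt_cov hV hdiff, hL, Measure.restrict_restrict measurableSet_Iio]
    have e : Iio δ ∩ Icc (0:ℝ) 1 = Ico 0 δ := by
      ext u
      simp only [mem_inter_iff, mem_Iio, mem_Icc, mem_Ico]
      constructor
      · rintro ⟨a, b, c⟩; exact ⟨b, a⟩
      · rintro ⟨a, b⟩; exact ⟨b, a, b.le.trans hδ.2.le⟩
    rw [e]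
    refine setIntegral_congr_fun measurableSet_Ico fun u hu => ?_
    simp only [hD]
    rw [hE u ⟨hu.1, hu.2.le.trans hδ.2.le⟩]
  have hLδ : L.real (Iio δ) = δ := by
    have e : Iio δ ∩ Icc (0:ℝ) 1 = Ico 0 δ := by
      ext u
      simp only [mem_inter_iff, mem_Iio, mem_Icc, mem_Ico]
      constructor
      · rintro ⟨a, b, c⟩; exact ⟨b, a⟩
      · rintro ⟨a, b⟩; exact ⟨b, a, b.le.trans hδ.2.le⟩
    rw [hL, measureReal_restrict_apply measurableSet_Iio, e]
    simp [hδ.1.le]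
  -- variance
  have hvar : variance (fun ω => downProb V δ (V (U ω))) μ = Q - δ ^ 2 := by
    have hc : (fun ω => downProb V δ (V (U ω))) =ᵐ[μ] fun ω => D (U ω) := by
      filter_upwards [hUmem] with ω hω
      simp only [hD]; rw [hE _ hω.1]
    rw [variance_congr hc, variance_eq_sub]
    · have h1 : ∫ ω, D (U ω) ∂μ = δ := by
        rw [← hint1, ← hUunif, integral_map hU.aemeasurable hDm.aestronglyMeasurable]
      have h2 : ∫ ω, D (U ω) ^ 2 ∂μ = Q := by
        have := integral_map (μ := μ) (hVc.comp hU).aemeasurable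
          (f := fun v => downProb V δ v ^ 2) (hΔmeas.pow_const 2).aestronglyMeasurable
        change ∫ v, downProb V δ v ^ 2 ∂(Measure.map (fun ω => Vc (U ω)) μ) = _ at this
        rw [hmapVU] at this
        exact this.symm
      simp only [Pi.pow_apply]
      rw [h1, h2]
    · refine MemLp.of_bound (hDm.comp hU).aestronglyMeasurable 1 (ae_of_all _ fun ω => ?_)
      rw [Real.norm_eq_abs, abs_le]
      constructor <;> linarith [(hDr (U ω)).1, (hDr (U ω)).2]
  refine ⟨?_, ?_, ?_⟩
  · rw [hvar]
    set T : Set (ℝ × ℝ) := {x | (x.1 < δ ∧ x.2 ≤ D x.1) ∨ (δ < x.1 ∧ D x.1 < x.2)} with hT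
    have hTm : MeasurableSet T := by
      apply MeasurableSet.union
      · exact (measurableSet_lt measurable_fst measurable_const).inter
          (measurableSet_le measurable_snd (hDm.comp measurable_fst))
      · exact (measurableSet_lt measurable_const measurable_fst).inter
          (measurableSet_lt (hDm.comp measurable_fst) measurable_snd)
    have hST : {ω | stochInv V δ (V (U ω)) (W ω) = U ω} =ᵐ[μ]
        ((fun ω => (U ω, W ω)) ⁻¹' T : Set Ω) := by
      filter_upwards [hUmem] with ω hω
      apply propext
      change stochInv V δ (V (U ω)) (W ω) = U ω ↔
        (U ω < δ ∧ W ω ≤ D (U ω)) ∨ (δ < U ω ∧ D (U ω) < W ω)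
      rw [stochInv_iff hV hω.1 hω.2]
      simp only [hD]; rw [hE _ hω.1]
    have hjoint : Measure.map (fun ω => (U ω, W ω)) μ = L.prod L := by
      rw [(indepFun_iff_map_prod_eq_prod_map_map hU.aemeasurable hW.aemeasurable).1 hindep,
        hUunif, hWunif]
    rw [measure_congr hST, ← Measure.map_apply (hU.prodMk hW) hTm, hjoint,
      Measure.prod_apply hTm]
    set G : ℝ → ℝ := fun u => (1 - D u) + (Iio δ).indicator (fun u => 2 * D u - 1) u with hG
    have hGi1 : Integrable (fun u => 1 - D u) L := (integrable_const 1).sub hDi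
    have hGi2' : Integrable (fun u => 2 * D u - 1) L :=
      (hDi.const_mul 2).sub (integrable_const 1)
    have hGi2 := hGi2'.indicator (measurableSet_Iio (a := δ))
    have hGint : ∫ u, G u ∂L = δ^2 + (1-δ)^2 + 2 * (Q - δ^2) := by
      rw [hG, integral_add hGi1 hGi2, integral_indicator measurableSet_Iio,
        integral_sub (integrable_const 1) hDi,
        integral_sub (hDi.const_mul 2).integrableOn (integrable_const 1),
        integral_const_mul, hint3, hint1]
      simp [hLδ]
      ring
    have hpt : ∀ᵐ u ∂L, L (Prod.mk u ⁻¹' T) = ENNReal.ofReal (G u) := by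
      filter_upwards [hLne] with u hu
      rcases lt_or_gt_of_ne hu with h | h
      · have e : Prod.mk u ⁻¹' T = {w | w ≤ D u} := by
          ext w; simp [hT, h, h.le, not_lt.2 h.le]
        rw [e, hL, unif_le (hDr u)]
        congr 1
        simp [hG, h]; ring
      · have e : Prod.mk u ⁻¹' T = {w | D u < w} := by
          ext w; simp [hT, h, not_lt.2 h.le]
        rw [e, hL, unif_gt (hDr u)]
        congr 1
        simp [hG, not_lt.2 h.le]
    rw [lintegral_congr_ae hpt, ← hGint, ofReal_integral_eq_lintegral_ofReal (f := G) (hGi1.add hGi2)]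
    refine ae_of_all _ fun u => ?_
    have := hDr u
    by_cases h : u < δ
    · simp [hG, h]; linarith [this.1]
    · simp [hG, h]; linarith [this.2]
  · have := variance_nonneg (fun ω => downProb V δ (V (U ω))) μ
    linarith
  · nlinarith [sq_nonneg (2 * δ - 1)]
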